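/- Let A be a finite alphabet, let X ⊆ A^ℤ be a transitive shift of finite type with left shift T, and let Y ⊆ A^ℤ be any shift with left shift S. Then for every continuous f ∈ C(X × Y), the functional ψ_f : M_S(Y) → ℝ, ψ_f(ν) = min { ∫ f dλ : λ ∈ M_{T×S}(X × Y), (π_Y)_* λ = ν }, is continuous and affine on M_S(Y) with the weak* topology. In particular, there exists an ergodic measure ν_0 ∈ ∂_e M_S(Y) with ψ_f(ν_0) = α(f), i.e. an ergodic α-maximizing measure exists. -/

import Mathlib

open MeasureTheory Filter Topology
open scoped ENNReal NNReal

noncomputable section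

/-- The left shift on `A^ℤ`: `(σ x)(j) = x(j+1)`. -/
def lshift {A : Type*} (x : ℤ → A) : ℤ → A := fun j => x (j + 1)

/-- The set of invariant Borel probability measures of a map. -/
def invMeas {Z : Type*} [MeasurableSpace Z] (U : Z → Z) : Set (ProbabilityMeasure Z) :=
  {μ | μ.toMeasure.map U = μ.toMeasure}

/-- `ψ_f(ν) = min { ∫ f dλ : λ ∈ M_{T×S}(X × Y), (π_Y)_* λ = ν }`. -/
def psi2 {X Y : Type*} [MeasurableSpace X] [MeasurableSpace Y]
    (T : X → X) (S : Y → Y) (f : X × Y → ℝ) (ν : ProbabilityMeasure Y) : ℝ :=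
  sInf {r | ∃ lam ∈ invMeas (Prod.map T S), lam.toMeasure.map Prod.snd = ν.toMeasure ∧
    r = ∫ p, f p ∂lam.toMeasure}

/-- `α(f) = sup_{ν ∈ M_S(Y)} ψ_f(ν)`. -/
def alpha2 {X Y : Type*} [MeasurableSpace X] [MeasurableSpace Y]
    (T : X → X) (S : Y → Y) (f : X × Y → ℝ) : ℝ :=
  sSup {r | ∃ ν ∈ invMeas S, r = psi2 T S f ν}

section Generic

variable {Z : Type*} [TopologicalSpace Z]

lemma integrable_of_continuous [CompactSpace Z] [MeasurableSpace Z] [BorelSpace Z]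
    {μ : Measure Z} [IsFiniteMeasure μ]
    {g : Z → ℝ} (hg : Continuous g) : Integrable g μ :=
  (BoundedContinuousFunction.mkOfCompact ⟨g, hg⟩).integrable μ

lemma continuous_integral_of_continuous [CompactSpace Z] [MeasurableSpace Z] [BorelSpace Z]
    {g : Z → ℝ} (hg : Continuous g) :
    Continuous fun μ : ProbabilityMeasure Z => ∫ z, g z ∂μ.toMeasure :=
  ProbabilityMeasure.continuous_integral_continuousMap (⟨g, hg⟩ : C(Z, ℝ))

lemma integral_iterate [MeasurableSpace Z] [BorelSpace Z]
    {μ : Measure Z} {U : Z → Z} (hU : Continuous U) (hμ : μ.map U = μ)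
    {g : Z → ℝ} (hg : Continuous g) (n : ℕ) : ∫ z, g (U^[n] z) ∂μ = ∫ z, g z ∂μ := by
  have h : MeasurePreserving U μ μ := ⟨hU.measurable, hμ⟩
  have h' := h.iterate n
  rw [← integral_map h'.measurable.aemeasurable, h'.map_eq]
  rw [h'.map_eq]
  exact hg.measurable.aestronglyMeasurable

lemma integral_birkhoffSum [CompactSpace Z] [MeasurableSpace Z] [BorelSpace Z]
    {μ : Measure Z} [IsFiniteMeasure μ] {U : Z → Z} (hU : Continuous U)
    (hμ : μ.map U = μ) {g : Z → ℝ} (hg : Continuous g) (n : ℕ) :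
    ∫ z, birkhoffSum U g n z ∂μ = n * ∫ z, g z ∂μ := by
  simp only [birkhoffSum]
  rw [integral_finsetSum]
  · simp [integral_iterate hU hμ hg]
  · exact fun i _ => integrable_of_continuous (hg.comp (hU.iterate i))

lemma continuous_birkhoffSum {U : Z → Z} (hU : Continuous U) {g : Z → ℝ} (hg : Continuous g)
    (n : ℕ) : Continuous (birkhoffSum U g n) := by
  unfold birkhoffSum
  exact continuous_finsetSum _ fun i _ => hg.comp (hU.iterate i)

lemma measure_ext_of_continuous [MeasurableSpace Z] [BorelSpace Z] [HasOuterApproxClosed Z]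
    {μ ν : Measure Z} [IsFiniteMeasure μ] [IsFiniteMeasure ν]
    (h : ∀ g : Z → ℝ, Continuous g → ∫ z, g z ∂μ = ∫ z, g z ∂ν) : μ = ν :=
  ext_of_forall_integral_eq_of_IsFiniteMeasure fun g => h g g.continuous

/-- The average of the first `m` iterated images of a probability measure. -/
def empiricalAverage {Z : Type*} [MeasurableSpace Z] (U : Z → Z) (μ : Measure Z) (m : ℕ) :
    Measure Z :=
  (m : ℝ≥0∞)⁻¹ • ∑ j ∈ Finset.range m, μ.map (U^[j])

lemma isProbabilityMeasure_empiricalAverage [MeasurableSpace Z] [BorelSpace Z]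
    {U : Z → Z} (hU : Continuous U) (μ : Measure Z)
    [IsProbabilityMeasure μ] {m : ℕ} (hm : m ≠ 0) :
    IsProbabilityMeasure (empiricalAverage U μ m) := by
  constructor
  have h (j : ℕ) : μ.map (U^[j]) Set.univ = 1 := by
    rw [Measure.map_apply (hU.iterate j).measurable MeasurableSet.univ]; simp
  simp only [empiricalAverage, Measure.smul_apply, Measure.finsetSum_apply, h]
  simp only [Finset.sum_const, Finset.card_range, nsmul_eq_mul, mul_one, smul_eq_mul]
  exact ENNReal.inv_mul_cancel (by simpa using hm) (by simp)

lemma integral_empiricalAverage [CompactSpace Z] [MeasurableSpace Z] [BorelSpace Z]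
    {U : Z → Z} (hU : Continuous U) (μ : Measure Z)
    [IsProbabilityMeasure μ] (m : ℕ) {g : Z → ℝ} (hg : Continuous g) :
    ∫ z, g z ∂(empiricalAverage U μ m) = (m : ℝ)⁻¹ * ∫ z, birkhoffSum U g m z ∂μ := by
  have hm (j : ℕ) : IsProbabilityMeasure (μ.map (U^[j])) :=
    Measure.isProbabilityMeasure_map (hU.iterate j).measurable.aemeasurable
  rw [empiricalAverage, integral_smul_measure, integral_finsetSum_measure
    (fun j _ => integrable_of_continuous hg)]
  simp only [birkhoffSum]
  rw [integral_finsetSum _ (f := fun i z => g (U^[i] z))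
    (fun i _ => integrable_of_continuous (hg.comp (hU.iterate i)))]
  simp only [ENNReal.toReal_inv, ENNReal.toReal_natCast, smul_eq_mul]
  congr 1
  refine Finset.sum_congr rfl fun j _ => ?_
  exact integral_map (hU.iterate j).measurable.aemeasurable hg.measurable.aestronglyMeasurable

/-- A Krylov–Bogolyubov theorem with control on integrals. -/
lemma exists_invMeas_of_birkhoffSum [CompactSpace Z] [MeasurableSpace Z] [BorelSpace Z]
    [T2Space Z] [HasOuterApproxClosed Z]
    {U : Z → Z} (hU : Continuous U)
    (μ : ℕ → ProbabilityMeasure Z) (m : ℕ → ℕ) (hm0 : ∀ n, m n ≠ 0) (hm : Tendsto m atTop atTop) :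
    ∃ lam ∈ invMeas U, ∀ g : Z → ℝ, Continuous g → ∀ c : ℝ,
      (∀ᶠ n in atTop, (m n : ℝ)⁻¹ * ∫ z, birkhoffSum U g (m n) z ∂(μ n).toMeasure ≤ c) →
        ∫ z, g z ∂lam.toMeasure ≤ c := by
  let avg : ℕ → ProbabilityMeasure Z := fun n =>
    ⟨empiricalAverage U (μ n).toMeasure (m n), isProbabilityMeasure_empiricalAverage hU _ (hm0 n)⟩
  obtain ⟨lam, hlam⟩ : ∃ lam, Tendsto avg (hyperfilter ℕ) (𝓝 lam) := by
    obtain ⟨lam, -, h⟩ := isCompact_univ.ultrafilter_le_nhds ((hyperfilter ℕ).map avg) (by simp)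
    exact ⟨lam, h⟩
  have key : ∀ g : Z → ℝ, Continuous g → ∀ c : ℝ,
      (∀ᶠ n in atTop, (m n : ℝ)⁻¹ * ∫ z, birkhoffSum U g (m n) z ∂(μ n).toMeasure ≤ c) →
        ∫ z, g z ∂lam.toMeasure ≤ c := by
    intro g hg c h
    refine le_of_tendsto (((continuous_integral_of_continuous hg).tendsto lam).comp hlam) ?_
    have h' := h.filter_mono Nat.hyperfilter_le_atTop
    filter_upwards [h'] with n hn
    simpa only [Function.comp, avg, ProbabilityMeasure.coe_mk,
      integral_empiricalAverage hU _ _ hg] using hn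
  refine ⟨lam, ?_, key⟩
  have hle : ∀ g : Z → ℝ, Continuous g →
      ∫ z, g (U z) ∂lam.toMeasure ≤ ∫ z, g z ∂lam.toMeasure := by
    intro g hg
    obtain ⟨C, hC⟩ := isCompact_univ.exists_bound_of_continuousOn hg.continuousOn
    suffices ∫ z, (g (U z) - g z) ∂lam.toMeasure ≤ 0 by
      rw [integral_sub (f := fun z => g (U z)) (integrable_of_continuous (hg.comp hU))
        (integrable_of_continuous hg)] at this
      linarith
    refine le_of_forall_pos_le_add fun ε hε => ?_
    rw [zero_add]
    refine key _ ((hg.comp hU).sub hg) ε ?_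
    have ht : Tendsto (fun n => (m n : ℝ)⁻¹ * (2 * C)) atTop (𝓝 (0 * (2 * C))) :=
      (tendsto_inv_atTop_zero.comp (tendsto_natCast_atTop_atTop.comp hm)).mul_const _
    rw [zero_mul] at ht
    filter_upwards [ht.eventually_le_const hε] with n hn
    refine le_trans ?_ hn
    gcongr
    have hb : ∀ z, birkhoffSum U (fun z => g (U z) - g z) (m n) z ≤ 2 * C := by
      intro z
      have h1 : birkhoffSum U (fun z => g (U z) - g z) (m n) z = g (U^[m n] z) - g z := by
        rw [← birkhoffSum_apply_sub_birkhoffSum]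
        simp only [birkhoffSum, ← Finset.sum_sub_distrib]
        refine Finset.sum_congr rfl fun i _ => ?_
        rw [← Function.iterate_succ_apply' U, ← Function.iterate_succ_apply U]
      rw [h1]
      have h2 := hC (U^[m n] z) trivial
      have h3 := hC z trivial
      rw [Real.norm_eq_abs, abs_le] at h2 h3
      linarith
    refine (integral_mono (integrable_of_continuous
      (continuous_birkhoffSum hU ((hg.comp hU).sub hg) _)) (integrable_const (2 * C)) hb).trans ?_
    simp
  have : IsProbabilityMeasure (lam.toMeasure.map U) :=
    Measure.isProbabilityMeasure_map hU.measurable.aemeasurable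
  refine measure_ext_of_continuous fun g hg => ?_
  rw [integral_map hU.measurable.aemeasurable hg.measurable.aestronglyMeasurable]
  refine le_antisymm (hle g hg) ?_
  have := hle (fun z => - g z) hg.neg
  simp only [integral_neg] at this
  linarith

lemma nonempty_invMeas [CompactSpace Z] [MeasurableSpace Z] [BorelSpace Z]
    [T2Space Z] [HasOuterApproxClosed Z]
    [Nonempty Z] {U : Z → Z} (hU : Continuous U) : (invMeas U).Nonempty := by
  obtain ⟨lam, h, -⟩ := exists_invMeas_of_birkhoffSum hU
    (fun _ => ⟨Measure.dirac (Classical.arbitrary Z), inferInstance⟩) (fun n => n + 1)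
    (fun n => n.succ_ne_zero) (tendsto_add_atTop_nat 1)
  exact ⟨lam, h⟩

lemma isClosed_invMeas [MeasurableSpace Z] [BorelSpace Z] [HasOuterApproxClosed Z]
    {U : Z → Z} (hU : Continuous U) : IsClosed (invMeas U) := by
  have h : invMeas U = {μ : ProbabilityMeasure Z | μ.map hU.measurable.aemeasurable = μ} := by
    ext μ
    simp only [invMeas, Set.mem_ofPred_eq]
    rw [← ProbabilityMeasure.toMeasure_injective.eq_iff, ProbabilityMeasure.toMeasure_map]
  rw [h]
  exact isClosed_eq (ProbabilityMeasure.continuous_map hU) continuous_id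

end Generic

section ErgodicMaximizer

lemma integral_convexCombination {Z : Type*} [TopologicalSpace Z] [CompactSpace Z]
    [MeasurableSpace Z] [BorelSpace Z] {ν ν₁ ν₂ : ProbabilityMeasure Z} {t : ℝ≥0} (ht : t ≤ 1)
    (h : ν.toMeasure = (t : ℝ≥0∞) • ν₁.toMeasure + (1 - (t : ℝ≥0∞)) • ν₂.toMeasure)
    {g : Z → ℝ} (hg : Continuous g) :
    ∫ z, g z ∂ν.toMeasure =
      (t : ℝ) * ∫ z, g z ∂ν₁.toMeasure + (1 - (t : ℝ)) * ∫ z, g z ∂ν₂.toMeasure := by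
  rw [h, integral_add_measure, integral_smul_measure, integral_smul_measure,
    ENNReal.toReal_sub_of_le (by exact_mod_cast ht) (by simp)]
  · simp
  · exact (integrable_of_continuous hg).smul_measure (by simp)
  · exact (integrable_of_continuous hg).smul_measure (by finiteness)

/-- Conditioning an invariant measure on an invariant set yields an invariant measure. -/
lemma exists_invMeas_cond {Z : Type*} [MeasurableSpace Z] {U : Z → Z} (hU : Measurable U)
    {ν : ProbabilityMeasure Z} (hν : ν ∈ invMeas U) {s : Set Z} (hs : MeasurableSet s) (hUs : U ⁻¹' s = s)
    (h0 : ν.toMeasure s ≠ 0) :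
    ∃ ν₁ ∈ invMeas U, ν.toMeasure s • ν₁.toMeasure = ν.toMeasure.restrict s := by
  have hp : IsProbabilityMeasure (ProbabilityTheory.cond ν.toMeasure s) :=
    ProbabilityTheory.cond_isProbabilityMeasure h0
  refine ⟨⟨ProbabilityTheory.cond ν.toMeasure s, hp⟩, ?_, ?_⟩
  · change (ProbabilityTheory.cond ν.toMeasure s).map U = ProbabilityTheory.cond ν.toMeasure s
    have hr : (ν.toMeasure.restrict s).map U = ν.toMeasure.restrict s := by
      conv_lhs => rw [← hUs]
      rw [← Measure.restrict_map hU hs, show ν.toMeasure.map U = ν.toMeasure from hν]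
    rw [ProbabilityTheory.cond, Measure.map_smul, hr]
  · change ν.toMeasure s • ProbabilityTheory.cond ν.toMeasure s = _
    rw [ProbabilityTheory.cond, smul_smul, ENNReal.mul_inv_cancel h0 (by finiteness), one_smul]

variable {Z : Type*} [TopologicalSpace Z] [CompactSpace Z] [T2Space Z] [SecondCountableTopology Z]
  [HasOuterApproxClosed Z] [MeasurableSpace Z] [BorelSpace Z]

/-- On the probability measures of a compact metrizable space there is a continuous strictly
convex functional. -/
lemma exists_continuous_strictConvex :
    ∃ Φ : ProbabilityMeasure Z → ℝ, Continuous Φ ∧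
      ∀ (ν ν₁ ν₂ : ProbabilityMeasure Z) (t : ℝ≥0), 0 < t → t < 1 →
        ν.toMeasure = (t : ℝ≥0∞) • ν₁.toMeasure + (1 - (t : ℝ≥0∞)) • ν₂.toMeasure →
        (t : ℝ) * Φ ν₁ + (1 - (t : ℝ)) * Φ ν₂ ≤ Φ ν → ν₁ = ν₂ := by
  let G : ℕ → C(Z, ℝ) := TopologicalSpace.denseSeq C(Z, ℝ)
  let a : ℕ → ProbabilityMeasure Z → ℝ := fun n ν => (1 + ‖G n‖)⁻¹ * ∫ z, G n z ∂ν.toMeasure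
  have ha : ∀ n, Continuous (a n) := fun n =>
    (continuous_integral_of_continuous (G n).continuous).const_mul _
  have ha1 : ∀ n ν, |a n ν| ≤ 1 := by
    intro n ν
    have h1 : ‖∫ z, G n z ∂ν.toMeasure‖ ≤ ‖G n‖ := by
      refine (norm_integral_le_of_norm_le_const (C := ‖G n‖)
        (ae_of_all _ fun z => (G n).norm_coe_le_norm z)).trans ?_
      simp
    have h2 : 0 ≤ ‖G n‖ := norm_nonneg _
    rw [Real.norm_eq_abs] at h1
    simp only [a, abs_mul, abs_inv]
    rw [abs_of_pos (by linarith : 0 < 1 + ‖G n‖), inv_mul_le_iff₀ (by linarith)]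
    linarith
  have hb : ∀ n ν, ‖(1 / 2 : ℝ) ^ n * a n ν ^ 2‖ ≤ (1 / 2 : ℝ) ^ n := by
    intro n ν
    have h1 : a n ν ^ 2 ≤ 1 := (sq_le_one_iff_abs_le_one _).2 (ha1 n ν)
    rw [Real.norm_of_nonneg (by positivity)]
    exact mul_le_of_le_one_right (by positivity) h1
  have hs : ∀ ν, Summable fun n => (1 / 2 : ℝ) ^ n * a n ν ^ 2 := fun ν =>
    Summable.of_norm_bounded summable_geometric_two fun n => hb n ν
  refine ⟨fun ν => ∑' n, (1 / 2 : ℝ) ^ n * a n ν ^ 2,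
    continuous_tsum (fun n => ((ha n).pow 2).const_mul _) summable_geometric_two hb, ?_⟩
  intro ν ν₁ ν₂ t ht0 ht1 h hΦ
  have ht0' : (0 : ℝ) < t := ht0
  have ht1' : (t : ℝ) < 1 := ht1
  have hν : ∀ n, a n ν = t * a n ν₁ + (1 - t) * a n ν₂ := by
    intro n
    simp only [a]
    rw [integral_convexCombination ht1.le h (G n).continuous]
    ring
  let d : ℕ → ℝ := fun n => t * ((1 / 2 : ℝ) ^ n * a n ν₁ ^ 2)
    + (1 - t) * ((1 / 2 : ℝ) ^ n * a n ν₂ ^ 2) - (1 / 2 : ℝ) ^ n * a n ν ^ 2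
  have hd : ∀ n, d n = (1 / 2 : ℝ) ^ n * (t * (1 - t)) * (a n ν₁ - a n ν₂) ^ 2 := by
    intro n
    simp only [d, hν]
    ring
  have hds : Summable d := (((hs ν₁).mul_left _).add ((hs ν₂).mul_left _)).sub (hs ν)
  have hdt : ∑' n, d n ≤ 0 := by
    simp only [d]
    rw [Summable.tsum_sub (((hs ν₁).mul_left _).add ((hs ν₂).mul_left _)) (hs ν),
      Summable.tsum_add ((hs ν₁).mul_left _) ((hs ν₂).mul_left _), tsum_mul_left, tsum_mul_left]
    linarith
  have hd0 : ∀ n, 0 ≤ d n := by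
    intro n
    rw [hd]
    have : (0 : ℝ) < t * (1 - t) := mul_pos ht0' (by linarith)
    positivity
  have heq : ∀ n, ∫ z, G n z ∂ν₁.toMeasure = ∫ z, G n z ∂ν₂.toMeasure := by
    intro n
    by_contra hne
    have hne' : a n ν₁ - a n ν₂ ≠ 0 := by
      have : (1 + ‖G n‖)⁻¹ ≠ 0 := by positivity
      simp only [a, ← mul_sub]
      exact mul_ne_zero this (sub_ne_zero.2 hne)
    have hpos : 0 < d n := by
      rw [hd]
      have : (0 : ℝ) < t * (1 - t) := mul_pos ht0' (by linarith)
      positivity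
    exact absurd (hds.tsum_pos hd0 n hpos) (not_lt.2 hdt)
  have hcont : ∀ μ : ProbabilityMeasure Z, Continuous fun g : C(Z, ℝ) => ∫ z, g z ∂μ.toMeasure := by
    intro μ
    have hL : LipschitzWith 1 fun g : C(Z, ℝ) => ∫ z, g z ∂μ.toMeasure := by
      refine LipschitzWith.of_dist_le_mul fun g g' => ?_
      rw [dist_eq_norm, ← integral_sub (integrable_of_continuous g.continuous)
        (integrable_of_continuous g'.continuous)]
      refine (norm_integral_le_of_norm_le_const (C := dist g g')
        (ae_of_all _ fun z => ?_)).trans (by simp)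
      rw [← dist_eq_norm]
      exact ContinuousMap.dist_apply_le_dist z
    exact hL.continuous
  have hall := (TopologicalSpace.denseRange_denseSeq C(Z, ℝ)).equalizer (hcont ν₁) (hcont ν₂)
    (funext heq)
  exact ProbabilityMeasure.toMeasure_injective
    (measure_ext_of_continuous fun g hg => congrFun hall ⟨g, hg⟩)

lemma exists_ergodic_maximizer [Nonempty Z] {U : Z → Z} (hU : Continuous U)
    {ψ : ProbabilityMeasure Z → ℝ} (hψ : ContinuousOn ψ (invMeas U))
    (hψa : ∀ ν₁ ∈ invMeas U, ∀ ν₂ ∈ invMeas U, ∀ t : ℝ≥0, t ≤ 1 →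
      ∀ ν : ProbabilityMeasure Z,
        ν.toMeasure = (t : ℝ≥0∞) • ν₁.toMeasure + (1 - (t : ℝ≥0∞)) • ν₂.toMeasure →
        ψ ν = (t : ℝ) * ψ ν₁ + (1 - (t : ℝ)) * ψ ν₂) :
    ∃ ν₀ ∈ invMeas U, Ergodic U ν₀.toMeasure ∧ IsMaxOn ψ (invMeas U) ν₀ := by
  obtain ⟨Φ, hΦ, hΦs⟩ := exists_continuous_strictConvex (Z := Z)
  have hcl := isClosed_invMeas hU
  obtain ⟨μ, hμ, hμmax⟩ := hcl.isCompact.exists_isMaxOn (nonempty_invMeas hU) hψ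
  have hKc : IsCompact (invMeas U ∩ ψ ⁻¹' {ψ μ}) :=
    (hψ.preimage_isClosed_of_isClosed hcl isClosed_singleton).isCompact
  obtain ⟨ν, ⟨hν, hνψ⟩, hνmax⟩ := hKc.exists_isMaxOn ⟨μ, hμ, rfl⟩ hΦ.continuousOn
  have hνψ' : ψ ν = ψ μ := hνψ
  refine ⟨ν, hν, ⟨⟨hU.measurable, hν⟩, ⟨fun s hs hUs => ?_⟩⟩, ?_⟩
  · rw [eventuallyConst_set']
    by_contra! hcon
    have h0 : ν.toMeasure s ≠ 0 := fun h => hcon.1 (ae_eq_empty.2 h)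
    have h0' : ν.toMeasure sᶜ ≠ 0 := fun h => hcon.2 (ae_eq_univ.2 h)
    obtain ⟨ν₁, hν₁, h₁⟩ := exists_invMeas_cond hU.measurable hν hs hUs h0
    obtain ⟨ν₂, hν₂, h₂⟩ := exists_invMeas_cond hU.measurable hν hs.compl
      (by rw [Set.preimage_compl, hUs]) h0'
    have ht : ((ν s : ℝ≥0) : ℝ≥0∞) = ν.toMeasure s := ν.ennreal_coeFn_eq_coeFn_toMeasure s
    have hcomp : ν.toMeasure sᶜ = 1 - ν.toMeasure s := prob_compl_eq_one_sub hs
    have hsum : ν.toMeasure = ((ν s : ℝ≥0) : ℝ≥0∞) • ν₁.toMeasure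
        + (1 - ((ν s : ℝ≥0) : ℝ≥0∞)) • ν₂.toMeasure := by
      rw [ht, ← hcomp, h₁, h₂, Measure.restrict_add_restrict_compl hs]
    have ht0 : 0 < ν s := by
      rw [← ENNReal.coe_pos, ht]; exact h0.bot_lt
    have ht1 : ν s < 1 := by
      rw [← ENNReal.coe_lt_coe, ht, ENNReal.coe_one]
      refine lt_of_le_of_ne prob_le_one fun h => h0' ?_
      rw [hcomp, h, tsub_self]
    have ht0' : (0 : ℝ) < ν s := ht0
    have ht1' : (ν s : ℝ) < 1 := ht1
    have hψν := hψa ν₁ hν₁ ν₂ hν₂ _ ht1.le ν hsum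
    have hle₁ : ψ ν₁ ≤ ψ μ := hμmax hν₁
    have hle₂ : ψ ν₂ ≤ ψ μ := hμmax hν₂
    have he₁ : ψ ν₁ = ψ μ := by nlinarith
    have he₂ : ψ ν₂ = ψ μ := by nlinarith
    have hΦ₁ : Φ ν₁ ≤ Φ ν := hνmax ⟨hν₁, he₁⟩
    have hΦ₂ : Φ ν₂ ≤ Φ ν := hνmax ⟨hν₂, he₂⟩
    have heq := hΦs ν ν₁ ν₂ _ ht0 ht1 hsum (by nlinarith)
    have hA : ν.toMeasure s * ν₁.toMeasure sᶜ = 0 := by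
      have := congrArg (fun m : Measure Z => m sᶜ) h₁
      simpa [Measure.restrict_apply hs.compl] using this
    have hB : ν.toMeasure sᶜ * ν₁.toMeasure s = 0 := by
      rw [heq]
      have := congrArg (fun m : Measure Z => m s) h₂
      simpa [Measure.restrict_apply hs] using this
    have hA' := (mul_eq_zero.1 hA).resolve_left h0
    have hB' := (mul_eq_zero.1 hB).resolve_left h0'
    have hC := prob_add_prob_compl (μ := ν₁.toMeasure) hs
    rw [hA', hB'] at hC
    simp at hC
  · intro ν' hν'
    change ψ ν' ≤ ψ ν
    rw [hνψ']
    exact hμmax hν'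

end ErgodicMaximizer

section RelativeMinimum

lemma psi2_le {X Y : Type*} [TopologicalSpace X] [CompactSpace X] [MeasurableSpace X]
    [TopologicalSpace Y] [CompactSpace Y] [MeasurableSpace Y]
    {T : X → X} {S : Y → Y} {f : X × Y → ℝ} (hf : Continuous f)
    {ν : ProbabilityMeasure Y} {lam : ProbabilityMeasure (X × Y)}
    (hlam : lam ∈ invMeas (Prod.map T S)) (hp : lam.toMeasure.map Prod.snd = ν.toMeasure) :
    psi2 T S f ν ≤ ∫ p, f p ∂lam.toMeasure := by
  obtain ⟨C, hC⟩ := isCompact_univ.exists_bound_of_continuousOn hf.continuousOn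
  refine csInf_le ⟨-C, ?_⟩ ⟨lam, hlam, hp, rfl⟩
  rintro r ⟨μ, -, -, rfl⟩
  have h := norm_integral_le_of_norm_le_const (μ := μ.toMeasure)
    (ae_of_all _ fun p => hC p trivial)
  rw [Real.norm_eq_abs] at h
  simp only [probReal_univ, mul_one] at h
  exact (abs_le.1 h).1

/-- Measurable selection of a minimizer among finitely many points. -/
lemma exists_measurable_argmin {X Y : Type*} [TopologicalSpace X] [MeasurableSpace X]
    [TopologicalSpace Y] [MeasurableSpace Y] [BorelSpace Y] {h : X × Y → ℝ}
    (hh : Continuous h) {E : Finset X}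
    (hE : E.Nonempty) :
    ∃ φ : Y → X, Measurable φ ∧ (Continuous fun y => h (φ y, y)) ∧
      ∀ x ∈ E, ∀ y, h (φ y, y) ≤ h (x, y) := by
  classical
  have hx : ∀ x, Continuous fun y => h (x, y) := fun x => hh.comp (by fun_prop)
  induction hE using Finset.Nonempty.cons_induction with
  | singleton a => exact ⟨fun _ => a, measurable_const, hx a, by simp⟩
  | cons a E ha hE ih =>
    obtain ⟨φ, hφ, hφc, hφmin⟩ := ih
    have hval : ∀ y, h ((if h (a, y) ≤ h (φ y, y) then a else φ y), y)
        = min (h (a, y)) (h (φ y, y)) := by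
      intro y
      by_cases hy : h (a, y) ≤ h (φ y, y)
      · simp [hy]
      · simp [hy, (not_le.1 hy).le]
    refine ⟨fun y => if h (a, y) ≤ h (φ y, y) then a else φ y, ?_, ?_, ?_⟩
    · exact Measurable.ite (isClosed_le (hx a) hφc).measurableSet measurable_const hφ
    · simp only [hval]
      exact (hx a).min hφc
    · intro x hxE y
      rw [hval]
      rcases Finset.mem_cons.1 hxE with rfl | hxE
      · exact min_le_left _ _
      · exact (min_le_right _ _).trans (hφmin x hxE y)

variable {X Y : Type*} [TopologicalSpace X] [CompactSpace X] [T2Space X]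
  [MeasurableSpace X] [BorelSpace X]
  [TopologicalSpace Y] [CompactSpace Y] [T2Space Y]
  [SecondCountableTopology Y] [MeasurableSpace Y] [BorelSpace Y]
  [HasOuterApproxClosed Y] [HasOuterApproxClosed (X × Y)]
  {T : X → X} {S : Y → Y} {f : X × Y → ℝ}

/-- A relative Krylov–Bogolyubov theorem: the limit measure may be chosen over a given invariant
measure of the factor. -/
lemma exists_joining (hT : Continuous T) (hS : Continuous S) {ν : ProbabilityMeasure Y}
    (hν : ν ∈ invMeas S) (φ : ℕ → Y → X) (hφ : ∀ n, Measurable (φ n)) (m : ℕ → ℕ)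
    (hm0 : ∀ n, m n ≠ 0) (hm : Tendsto m atTop atTop) :
    ∃ lam ∈ invMeas (Prod.map T S), lam.toMeasure.map Prod.snd = ν.toMeasure ∧
      ∀ g : X × Y → ℝ, Continuous g → ∀ c : ℝ,
        (∀ᶠ n in atTop, (m n : ℝ)⁻¹ *
          ∫ y, birkhoffSum (Prod.map T S) g (m n) (φ n y, y) ∂ν.toMeasure ≤ c) →
        ∫ p, g p ∂lam.toMeasure ≤ c := by
  have hTS : Continuous (Prod.map T S) := hT.prodMap hS
  have hφ' : ∀ n, Measurable fun y => (φ n y, y) := fun n => (hφ n).prodMk measurable_id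
  obtain ⟨lam, hlam, hle⟩ := exists_invMeas_of_birkhoffSum hTS
    (fun n => ν.map (hφ' n).aemeasurable) m hm0 hm
  have hle' : ∀ g : X × Y → ℝ, Continuous g → ∀ c : ℝ,
        (∀ᶠ n in atTop, (m n : ℝ)⁻¹ *
          ∫ y, birkhoffSum (Prod.map T S) g (m n) (φ n y, y) ∂ν.toMeasure ≤ c) →
        ∫ p, g p ∂lam.toMeasure ≤ c := by
    intro g hg c h
    refine hle g hg c ?_
    filter_upwards [h] with n hn
    rwa [ProbabilityMeasure.toMeasure_map, integral_map (hφ' n).aemeasurable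
      (continuous_birkhoffSum hTS hg _).measurable.aestronglyMeasurable]
  refine ⟨lam, hlam, ?_, hle'⟩
  have hsnd : ∀ h : Y → ℝ, Continuous h → ∫ p, h p.2 ∂lam.toMeasure ≤ ∫ y, h y ∂ν.toMeasure := by
    intro h hh
    refine hle' (fun p => h p.2) (hh.comp continuous_snd) _ (Eventually.of_forall fun n => ?_)
    have heq : ∀ y, birkhoffSum (Prod.map T S) (fun p => h p.2) (m n) (φ n y, y)
        = birkhoffSum S h (m n) y := by
      intro y
      simp [birkhoffSum, Prod.map_iterate]
    simp only [heq]
    rw [integral_birkhoffSum hS hν hh, inv_mul_cancel_left₀ (by exact_mod_cast hm0 n)]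
  have : IsProbabilityMeasure (lam.toMeasure.map Prod.snd) :=
    Measure.isProbabilityMeasure_map measurable_snd.aemeasurable
  refine measure_ext_of_continuous fun h hh => ?_
  rw [integral_map measurable_snd.aemeasurable hh.measurable.aestronglyMeasurable]
  refine le_antisymm (hsnd h hh) ?_
  have := hsnd (fun y => - h y) hh.neg
  simp only [integral_neg] at this
  linarith

lemma le_psi2 [Nonempty X] (hT : Continuous T) (hS : Continuous S) {ν : ProbabilityMeasure Y}
    (hν : ν ∈ invMeas S) {c : ℝ}
    (h : ∀ lam ∈ invMeas (Prod.map T S), lam.toMeasure.map Prod.snd = ν.toMeasure →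
      c ≤ ∫ p, f p ∂lam.toMeasure) : c ≤ psi2 T S f ν := by
  obtain ⟨lam, hlam, hp, -⟩ := exists_joining hT hS hν (fun _ _ => Classical.arbitrary X)
    (fun _ => measurable_const) (fun n => n + 1) (fun n => n.succ_ne_zero) (tendsto_add_atTop_nat 1)
  refine le_csInf ⟨_, lam, hlam, hp, rfl⟩ ?_
  rintro r ⟨μ, hμ, hμp, rfl⟩
  exact h μ hμ hμp

lemma psi2_le_psi2_add [Nonempty X] (hT : Continuous T) (hS : Continuous S)
    {g : X × Y → ℝ} (hf : Continuous f) (hg : Continuous g) {ε : ℝ}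
    (h : ∀ p, f p ≤ g p + ε) {ν : ProbabilityMeasure Y} (hν : ν ∈ invMeas S) :
    psi2 T S f ν ≤ psi2 T S g ν + ε := by
  rw [← sub_le_iff_le_add]
  refine le_psi2 hT hS hν fun lam hlam hp => ?_
  rw [sub_le_iff_le_add]
  refine (psi2_le hf hlam hp).trans ?_
  refine (integral_mono (integrable_of_continuous hf)
    ((integrable_of_continuous hg).add (integrable_const ε)) h).trans ?_
  rw [integral_add' (integrable_of_continuous hg) (integrable_const ε)]
  simp

/-- If orbit segments of the fibre system can be glued at bounded cost, then `psi2` is a uniform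
limit of integrals against continuous functions. -/
lemma psi2_approx_of_gluing [Nonempty X] (hT : Continuous T) (hS : Continuous S)
    (hf : Continuous f)
    (hfin : ∀ m : ℕ, ∃ E : Finset X, ∀ x, ∃ e ∈ E, ∀ y,
      birkhoffSum (Prod.map T S) f m (x, y) = birkhoffSum (Prod.map T S) f m (e, y))
    {K : ℝ} (hglue : ∀ (M N : ℕ) (x₁ x₂ : X) (y : Y), ∃ x' : X,
      birkhoffSum (Prod.map T S) f (M + N) (x', y) ≤
        birkhoffSum (Prod.map T S) f M (x₁, y) +
          birkhoffSum (Prod.map T S) f N (x₂, S^[M] y) + K)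
    {ε : ℝ} (hε : 0 < ε) :
    ∃ F : Y → ℝ, Continuous F ∧
      ∀ ν ∈ invMeas S, |psi2 T S f ν - ∫ y, F y ∂ν.toMeasure| ≤ ε := by
  have hTS : Continuous (Prod.map T S) := hT.prodMap hS
  have hB := continuous_birkhoffSum hTS hf
  have hsel : ∀ m : ℕ, ∃ φ : Y → X, Measurable φ ∧
      (Continuous fun y => birkhoffSum (Prod.map T S) f m (φ y, y)) ∧
      ∀ x y, birkhoffSum (Prod.map T S) f m (φ y, y) ≤ birkhoffSum (Prod.map T S) f m (x, y) := by
    intro m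
    obtain ⟨E, hE⟩ := hfin m
    obtain ⟨e, he, -⟩ := hE (Classical.arbitrary X)
    obtain ⟨φ, h1, h2, h3⟩ := exists_measurable_argmin (hB m) ⟨e, he⟩
    refine ⟨φ, h1, h2, fun x y => ?_⟩
    obtain ⟨e', he', h'⟩ := hE x
    rw [h']
    exact h3 e' he' y
  choose φ hφ hF hmin using hsel
  let F : ℕ → Y → ℝ := fun m y => birkhoffSum (Prod.map T S) f m (φ m y, y)
  have hsub : ∀ M N y, F (M + N) y ≤ F M y + F N (S^[M] y) + K := by
    intro M N y
    obtain ⟨x', hx'⟩ := hglue M N (φ M y) (φ N (S^[M] y)) y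
    exact (hmin _ x' y).trans hx'
  obtain ⟨N, hN⟩ := exists_nat_gt (K / ε)
  have hN1 : 0 < N + 1 := N.succ_pos
  have hNpos : (0 : ℝ) < ((N + 1 : ℕ) : ℝ) := by exact_mod_cast hN1
  have hKN : ((N + 1 : ℕ) : ℝ)⁻¹ * K ≤ ε := by
    rw [inv_mul_le_iff₀ hNpos]
    rw [div_lt_iff₀ hε] at hN
    push_cast
    nlinarith
  refine ⟨fun y => ((N + 1 : ℕ) : ℝ)⁻¹ * F (N + 1) y, (hF _).const_mul _, fun ν hν => ?_⟩
  rw [integral_const_mul]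
  have hFint : ∀ m, Integrable (F m) ν.toMeasure := fun m => integrable_of_continuous (hF m)
  have hlower : ((N + 1 : ℕ) : ℝ)⁻¹ * ∫ y, F (N + 1) y ∂ν.toMeasure ≤ psi2 T S f ν := by
    refine le_psi2 hT hS hν fun lam hlam hp => ?_
    rw [inv_mul_le_iff₀ hNpos, ← integral_birkhoffSum hTS hlam hf, ← hp,
      integral_map measurable_snd.aemeasurable (hF _).measurable.aestronglyMeasurable]
    exact integral_mono (integrable_of_continuous ((hF _).comp continuous_snd))
      (integrable_of_continuous (hB _)) fun p => hmin _ p.1 p.2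
  have hiter : ∀ n : ℕ, ∫ y, F (n * (N + 1)) y ∂ν.toMeasure
      ≤ n * (∫ y, F (N + 1) y ∂ν.toMeasure + K) := by
    intro n
    induction n with
    | zero => simp [F]
    | succ n ih =>
      have h1 : Integrable (fun y => F (N + 1) (S^[n * (N + 1)] y)) ν.toMeasure :=
        integrable_of_continuous ((hF _).comp (hS.iterate _))
      have h2 := integral_mono (hFint ((n + 1) * (N + 1)))
        (((hFint (n * (N + 1))).add h1).add (integrable_const K))
        (fun y => by
          have := hsub (n * (N + 1)) (N + 1) y
          rw [← Nat.succ_mul] at this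
          exact this)
      rw [integral_add' ((hFint (n * (N + 1))).add h1) (integrable_const K),
        integral_add' (hFint (n * (N + 1))) h1, integral_iterate hS hν (hF _)] at h2
      simp only [integral_const, probReal_univ, one_smul] at h2
      push_cast
      change _ ≤ _ + ∫ y, F (N + 1) y ∂ν.toMeasure + K at h2
      linarith
  have hupper : psi2 T S f ν ≤
      ((N + 1 : ℕ) : ℝ)⁻¹ * (∫ y, F (N + 1) y ∂ν.toMeasure + K) := by
    obtain ⟨lam, hlam, hp, hle⟩ := exists_joining hT hS hν
      (fun n => φ ((n + 1) * (N + 1))) (fun n => hφ _) (fun n => (n + 1) * (N + 1))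
      (fun n => by positivity)
      ((tendsto_add_atTop_nat 1).atTop_mul_const' hN1)
    refine (psi2_le hf hlam hp).trans (hle f hf _ (Eventually.of_forall fun n => ?_))
    have hpos : (0 : ℝ) < (((n + 1) * (N + 1) : ℕ) : ℝ) := by positivity
    rw [inv_mul_le_iff₀ hpos]
    refine (hiter (n + 1)).trans (le_of_eq ?_)
    rw [Nat.cast_mul (n + 1) (N + 1), mul_assoc, mul_inv_cancel_left₀ hNpos.ne']
  rw [abs_le]
  rw [mul_add] at hupper
  constructor <;> linarith

end RelativeMinimum

section Shift

variable {A : Type*} {X : Set (ℤ → A)} {TX : X → X}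

lemma iterate_lshift_apply (hTX : ∀ x : X, (TX x : ℤ → A) = lshift ↑x) (n : ℕ) (x : X) (j : ℤ) :
    (TX^[n] x : ℤ → A) j = (x : ℤ → A) (j + n) := by
  induction n generalizing j with
  | zero => simp
  | succ n ih =>
    rw [Function.iterate_succ_apply', hTX, lshift, ih]
    exact congrArg (x : ℤ → A) (by push_cast; ring)

lemma surjective_of_lshift_image (hXinv : lshift '' X = X)
    (hTX : ∀ x : X, (TX x : ℤ → A) = lshift ↑x) : Function.Surjective TX := by
  rintro ⟨x, hx⟩
  obtain ⟨z, hz, rfl⟩ := hXinv.symm ▸ hx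
  exact ⟨⟨z, hz⟩, Subtype.ext (hTX _)⟩

lemma continuous_of_lshift [TopologicalSpace A] (hTX : ∀ x : X, (TX x : ℤ → A) = lshift ↑x) :
    Continuous TX := by
  refine Continuous.subtype_mk (f := fun x : X => lshift (x : ℤ → A)) ?_ (fun x => hTX x ▸ (TX x).2)
    |>.congr fun x => Subtype.ext (hTX x).symm
  exact continuous_pi fun j => (continuous_apply (j + 1)).comp continuous_subtype_val

/-- A continuous choice of representatives of the cylinders over a finite window. -/
lemma exists_cylinder_representatives [Finite A] [TopologicalSpace A] [DiscreteTopology A]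
    [Nonempty X] (W : Finset ℤ) :
    ∃ ρ : X → X, Continuous ρ ∧ (Set.range ρ).Finite ∧
      (∀ x : X, ∀ j ∈ W, (ρ x : ℤ → A) j = (x : ℤ → A) j) ∧
      ∀ x x' : X, (∀ j ∈ W, (x : ℤ → A) j = (x' : ℤ → A) j) → ρ x = ρ x' := by
  let p : X → (W → A) := fun x j => (x : ℤ → A) j
  refine ⟨fun x => Function.invFun p (p x), ?_, ?_, ?_, ?_⟩
  · refine (continuous_of_discreteTopology (f := Function.invFun p)).comp ?_
    exact continuous_pi fun j => (continuous_apply (j : ℤ)).comp continuous_subtype_val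
  · refine (Set.finite_range (Function.invFun p)).subset ?_
    rintro _ ⟨x, rfl⟩
    exact ⟨_, rfl⟩
  · intro x j hj
    exact congrFun (Function.invFun_eq (f := p) (b := p x) ⟨x, rfl⟩) ⟨j, hj⟩
  · intro x x' h
    have : p x = p x' := funext fun j => h j j.2
    change Function.invFun p (p x) = Function.invFun p (p x')
    rw [this]

lemma exists_window_of_continuous [TopologicalSpace A] [DiscreteTopology A] [CompactSpace X]
    {Y : Type*} [TopologicalSpace Y] [CompactSpace Y] {f : X × Y → ℝ} (hf : Continuous f)
    {ε : ℝ} (hε : 0 < ε) :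
    ∃ r : ℕ, ∀ x x' : X, (∀ j ∈ Finset.Icc (-(r : ℤ)) r, (x : ℤ → A) j = (x' : ℤ → A) j) →
      ∀ y, |f (x, y) - f (x', y)| ≤ ε := by
  by_contra! hcon
  let Q : ℕ → Set (X × X × Y) := fun r =>
    {q | (∀ j ∈ Finset.Icc (-(r : ℤ)) r, (q.1 : ℤ → A) j = (q.2.1 : ℤ → A) j) ∧
      ε ≤ |f (q.1, q.2.2) - f (q.2.1, q.2.2)|}
  have hcl : ∀ r, IsClosed (Q r) := by
    intro r
    have h : Q r = (⋂ j ∈ Finset.Icc (-(r : ℤ)) r, {q | (q.1 : ℤ → A) j = (q.2.1 : ℤ → A) j}) ∩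
        {q | ε ≤ |f (q.1, q.2.2) - f (q.2.1, q.2.2)|} := by
      ext q
      simp [Q]
    rw [h]
    refine (isClosed_biInter fun j _ => isClosed_eq ?_ ?_).inter
      (isClosed_le continuous_const
        ((hf.comp (by fun_prop)).sub (hf.comp (by fun_prop))).abs)
    · exact (continuous_apply j).comp (continuous_subtype_val.comp continuous_fst)
    · exact (continuous_apply j).comp
        (continuous_subtype_val.comp (continuous_fst.comp continuous_snd))
  obtain ⟨q, hq⟩ := IsCompact.nonempty_iInter_of_sequence_nonempty_isCompact_isClosed Q
    (fun r q hq => ⟨fun j hj => hq.1 j (by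
      rw [Finset.mem_Icc] at hj ⊢; push_cast; omega), hq.2⟩)
    (fun r => by
      obtain ⟨x, x', h, y, hy⟩ := hcon r
      exact ⟨(x, x', y), h, hy.le⟩)
    (hcl 0).isCompact hcl
  have hq' := Set.mem_iInter.1 hq
  have heq : q.1 = q.2.1 := by
    refine Subtype.ext (funext fun j => (hq' j.natAbs).1 j ?_)
    rw [Finset.mem_Icc]
    omega
  have := (hq' 0).2
  rw [heq, sub_self, abs_zero] at this
  linarith

lemma birkhoffSum_eq_of_window (hTX : ∀ x : X, (TX x : ℤ → A) = lshift ↑x) {Y : Type*} {S : Y → Y}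
    {g : X × Y → ℝ} {r : ℕ}
    (hg : ∀ x x' : X, (∀ j ∈ Finset.Icc (-(r : ℤ)) r, (x : ℤ → A) j = (x' : ℤ → A) j) →
      ∀ y, g (x, y) = g (x', y)) (m : ℕ) {x x' : X}
    (h : ∀ j ∈ Finset.Icc (-(r : ℤ)) (r + m), (x : ℤ → A) j = (x' : ℤ → A) j) (y : Y) :
    birkhoffSum (Prod.map TX S) g m (x, y) = birkhoffSum (Prod.map TX S) g m (x', y) := by
  refine Finset.sum_congr rfl fun i hi => ?_
  rw [Finset.mem_range] at hi
  simp only [Prod.map_iterate, Prod.map_apply]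
  refine hg _ _ (fun j hj => ?_) _
  rw [iterate_lshift_apply hTX, iterate_lshift_apply hTX]
  rw [Finset.mem_Icc] at hj
  exact h _ (by rw [Finset.mem_Icc]; omega)

lemma exists_gluing_of_window (hXinv : lshift '' X = X)
    (hTX : ∀ x : X, (TX x : ℤ → A) = lshift ↑x) {D : ℕ}
    (hD : ∀ x₁ ∈ X, ∀ x₂ ∈ X, ∀ b₁ a₂ : ℤ, (D : ℤ) ≤ a₂ - b₁ →
      ∃ x' ∈ X, (∀ j : ℤ, j ≤ b₁ → x' j = x₁ j) ∧ (∀ j : ℤ, a₂ ≤ j → x' j = x₂ j))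
    {Y : Type*} {S : Y → Y} {g : X × Y → ℝ} {r : ℕ}
    (hg : ∀ x x' : X, (∀ j ∈ Finset.Icc (-(r : ℤ)) r, (x : ℤ → A) j = (x' : ℤ → A) j) →
      ∀ y, g (x, y) = g (x', y)) {C : ℝ} (hC : ∀ p, |g p| ≤ C)
    (M N : ℕ) (x₁ x₂ : X) (y : Y) :
    ∃ x' : X, birkhoffSum (Prod.map TX S) g (M + N) (x', y) ≤
      birkhoffSum (Prod.map TX S) g M (x₁, y) + birkhoffSum (Prod.map TX S) g N (x₂, S^[M] y)
        + ((D + 2 * r : ℕ) : ℝ) * (2 * C) := by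
  obtain ⟨z, rfl⟩ := (surjective_of_lshift_image hXinv hTX).iterate M x₂
  obtain ⟨x', hx', hl, hr⟩ := hD x₁ x₁.2 z z.2 M (M + D) (by omega)
  have hC0 : 0 ≤ C := (abs_nonneg _).trans (hC (x₁, y))
  refine ⟨⟨x', hx'⟩, ?_⟩
  let u : ℕ → ℝ := fun i =>
    if i < M then g (TX^[i] x₁, S^[i] y) else g (TX^[i] z, S^[i] y)
  have hu : birkhoffSum (Prod.map TX S) g M (x₁, y)
      + birkhoffSum (Prod.map TX S) g N (TX^[M] z, S^[M] y) = ∑ i ∈ Finset.range (M + N), u i := by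
    rw [Finset.sum_range_add]
    congr 1
    · refine Finset.sum_congr rfl fun i hi => ?_
      simp only [u, if_pos (Finset.mem_range.1 hi), Prod.map_iterate, Prod.map_apply]
    · refine Finset.sum_congr rfl fun i hi => ?_
      simp only [u, if_neg (not_lt.2 (Nat.le_add_right M i)), Prod.map_iterate, Prod.map_apply]
      rw [← Function.iterate_add_apply, ← Function.iterate_add_apply, Nat.add_comm i M]
  rw [hu]
  have hpt : ∀ i ∈ Finset.range (M + N), g ((Prod.map TX S)^[i] (⟨x', hx'⟩, y)) ≤
      u i + if i ∈ Finset.Ico (M - r) (M + D + r) then 2 * C else 0 := by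
    intro i _
    simp only [Prod.map_iterate, Prod.map_apply]
    have huC : -C ≤ u i := by
      simp only [u]
      split_ifs
      · exact (abs_le.1 (hC _)).1
      · exact (abs_le.1 (hC _)).1
    have hgC := (abs_le.1 (hC (TX^[i] ⟨x', hx'⟩, S^[i] y))).2
    split_ifs with hi
    · linarith
    · rw [Finset.mem_Ico, not_and_or, not_le, not_lt] at hi
      rw [add_zero]
      refine le_of_eq ?_
      rcases hi with hi | hi
      · simp only [u, if_pos (show i < M by omega)]
        refine hg _ _ (fun j hj => ?_) _
        rw [Finset.mem_Icc] at hj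
        rw [iterate_lshift_apply hTX, iterate_lshift_apply hTX]
        exact hl _ (by omega)
      · simp only [u, if_neg (show ¬ i < M by omega)]
        refine hg _ _ (fun j hj => ?_) _
        rw [Finset.mem_Icc] at hj
        rw [iterate_lshift_apply hTX, iterate_lshift_apply hTX]
        exact hr _ (by omega)
  refine (Finset.sum_le_sum hpt).trans ?_
  rw [Finset.sum_add_distrib]
  gcongr
  rw [← Finset.sum_filter, Finset.sum_const, nsmul_eq_mul]
  gcongr
  refine (Finset.card_le_card (t := Finset.Ico (M - r) (M + D + r)) fun i hi =>
    (Finset.mem_filter.1 hi).2).trans ?_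
  rw [Nat.card_Ico]
  omega

/-- For a shift with the gluing property, `psi2` is a uniform limit of integrals against continuous
functions. -/
lemma psi2_approx [Finite A] [TopologicalSpace A] [DiscreteTopology A] [MeasurableSpace A]
    [BorelSpace A] [Nonempty X] [CompactSpace X] (hXinv : lshift '' X = X)
    (hTX : ∀ x : X, (TX x : ℤ → A) = lshift ↑x) {D : ℕ}
    (hD : ∀ x₁ ∈ X, ∀ x₂ ∈ X, ∀ b₁ a₂ : ℤ, (D : ℤ) ≤ a₂ - b₁ →
      ∃ x' ∈ X, (∀ j : ℤ, j ≤ b₁ → x' j = x₁ j) ∧ (∀ j : ℤ, a₂ ≤ j → x' j = x₂ j))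
    {Y : Type*} [TopologicalSpace Y] [CompactSpace Y] [T2Space Y] [SecondCountableTopology Y]
    [MeasurableSpace Y] [BorelSpace Y] {S : Y → Y} (hS : Continuous S)
    {f : X × Y → ℝ} (hf : Continuous f) {ε : ℝ} (hε : 0 < ε) :
    ∃ F : Y → ℝ, Continuous F ∧
      ∀ ν ∈ invMeas S, |psi2 TX S f ν - ∫ y, F y ∂ν.toMeasure| ≤ ε := by
  have hT := continuous_of_lshift hTX
  obtain ⟨r, hr⟩ := exists_window_of_continuous hf (half_pos hε)
  obtain ⟨ρ, hρc, -, hρ, hρeq⟩ := exists_cylinder_representatives (X := X)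
    (Finset.Icc (-(r : ℤ)) r)
  let g : X × Y → ℝ := fun p => f (ρ p.1, p.2)
  have hgc : Continuous g := hf.comp ((hρc.comp continuous_fst).prodMk continuous_snd)
  have hg : ∀ x x' : X, (∀ j ∈ Finset.Icc (-(r : ℤ)) r, (x : ℤ → A) j = (x' : ℤ → A) j) →
      ∀ y, g (x, y) = g (x', y) := by
    intro x x' h y
    simp only [g, hρeq x x' h]
  obtain ⟨C, hC⟩ := isCompact_univ.exists_bound_of_continuousOn hgc.continuousOn
  have hfg : ∀ p : X × Y, |f p - g p| ≤ ε / 2 := fun p =>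
    hr _ _ (fun j hj => (hρ p.1 j hj).symm) p.2
  have hfin : ∀ m : ℕ, ∃ E : Finset X, ∀ x, ∃ e ∈ E, ∀ y,
      birkhoffSum (Prod.map TX S) g m (x, y) = birkhoffSum (Prod.map TX S) g m (e, y) := by
    intro m
    obtain ⟨ρ', -, hfin, hρ', -⟩ := exists_cylinder_representatives (X := X)
      (Finset.Icc (-(r : ℤ)) (r + m))
    refine ⟨hfin.toFinset, fun x => ⟨ρ' x, by simp, fun y => ?_⟩⟩
    exact birkhoffSum_eq_of_window hTX hg m (fun j hj => (hρ' x j hj).symm) y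
  obtain ⟨F, hF, hFψ⟩ := psi2_approx_of_gluing hT hS hgc hfin
    (exists_gluing_of_window hXinv hTX hD hg fun p => hC p trivial) (half_pos hε)
  refine ⟨F, hF, fun ν hν => ?_⟩
  have h1 := psi2_le_psi2_add hT hS hf hgc (ε := ε / 2)
    (fun p => by linarith [(abs_le.1 (hfg p)).2]) hν
  have h2 := psi2_le_psi2_add hT hS hgc hf (ε := ε / 2)
    (fun p => by linarith [(abs_le.1 (hfg p)).1]) hν
  have h3 := abs_le.1 (hFψ ν hν)
  rw [abs_le]
  constructor <;> linarith

end Shift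

lemma convexCombination_mem_invMeas {Z : Type*} [MeasurableSpace Z] {U : Z → Z} (hU : Measurable U)
    {ν ν₁ ν₂ : ProbabilityMeasure Z} (h₁ : ν₁ ∈ invMeas U) (h₂ : ν₂ ∈ invMeas U) {s t : ℝ≥0∞}
    (h : ν.toMeasure = s • ν₁.toMeasure + t • ν₂.toMeasure) : ν ∈ invMeas U := by
  change ν.toMeasure.map U = ν.toMeasure
  rw [h, Measure.map_add _ _ hU, Measure.map_smul, Measure.map_smul,
    show ν₁.toMeasure.map U = _ from h₁, show ν₂.toMeasure.map U = _ from h₂]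

/-- let `A` be a finite alphabet, `X ⊆ A^ℤ` a transitive shift of finite
type and `Y ⊆ A^ℤ` any shift (with the restricted left shifts `T`, `S`).  Then for
every continuous `f ∈ C(X × Y)` the functional `ψ_f : M_S(Y) → ℝ` is continuous and
affine, and in particular there exists an ergodic `α`-maximizing measure for `f`. -/
theorem stmt19
    {A : Type*} [Fintype A] [TopologicalSpace A] [DiscreteTopology A]
    [MeasurableSpace A] [BorelSpace A]
    (X Y : Set (ℤ → A))
    (hXne : X.Nonempty) (hYne : Y.Nonempty)
    (hXcl : IsCompact X) (hYcl : IsCompact Y)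
    (hXinv : lshift '' X = X) (hYinv : lshift '' Y = Y)
    -- `X` is a shift of finite type
    (hSFT : ∃ (M : ℕ) (F : Set (Fin (M + 1) → A)),
      X = {x : ℤ → A | ∀ j : ℤ, (fun i : Fin (M + 1) => x (j + (i : ℤ))) ∉ F})
    -- `X` is transitive
    (hTrans : ∃ D : ℕ, ∀ x₁ ∈ X, ∀ x₂ ∈ X, ∀ b₁ a₂ : ℤ, (D : ℤ) ≤ a₂ - b₁ →
      ∃ x' ∈ X, (∀ j : ℤ, j ≤ b₁ → x' j = x₁ j) ∧ (∀ j : ℤ, a₂ ≤ j → x' j = x₂ j))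
    -- the restricted shift maps
    (TX : X → X) (SY : Y → Y)
    (hTX : ∀ x : X, (TX x : ℤ → A) = lshift ↑x)
    (hSY : ∀ y : Y, (SY y : ℤ → A) = lshift ↑y)
    (f : X × Y → ℝ) (hf : Continuous f) :
    -- `ψ_f` is continuous on `M_S(Y)`
    ContinuousOn (psi2 TX SY f) (invMeas SY) ∧
    -- `ψ_f` is affine on `M_S(Y)`
    (∀ ν₁ ∈ invMeas SY, ∀ ν₂ ∈ invMeas SY, ∀ t : ℝ≥0, t ≤ 1 →
      ∀ ν : ProbabilityMeasure Y,
        ν.toMeasure = (t : ℝ≥0∞) • ν₁.toMeasure + (1 - (t : ℝ≥0∞)) • ν₂.toMeasure →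
        psi2 TX SY f ν = (t : ℝ) * psi2 TX SY f ν₁ + (1 - (t : ℝ)) * psi2 TX SY f ν₂) ∧
    -- an ergodic `α`-maximizing measure exists
    (∃ ν₀ ∈ invMeas SY, Ergodic SY ν₀.toMeasure ∧
      psi2 TX SY f ν₀ = alpha2 TX SY f) := by
  have hXne' : Nonempty X := hXne.to_subtype
  have hYne' : Nonempty Y := hYne.to_subtype
  have hXc : CompactSpace X := isCompact_iff_compactSpace.1 hXcl
  have hYc : CompactSpace Y := isCompact_iff_compactSpace.1 hYcl
  have hS : Continuous SY := continuous_of_lshift hSY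
  obtain ⟨D, hD⟩ := hTrans
  have happrox : ∀ ε : ℝ, 0 < ε → ∃ F : Y → ℝ, Continuous F ∧
      ∀ ν ∈ invMeas SY, |psi2 TX SY f ν - ∫ y, F y ∂ν.toMeasure| ≤ ε := fun ε hε =>
    psi2_approx hXinv hTX hD hS hf hε
  have hcont : ContinuousOn (psi2 TX SY f) (invMeas SY) := by
    refine continuousOn_of_uniform_approx_of_continuousOn fun u hu => ?_
    obtain ⟨ε, hε, hεu⟩ := Metric.mem_uniformity_dist.1 hu
    obtain ⟨F, hF, hFψ⟩ := happrox (ε / 2) (half_pos hε)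
    refine ⟨fun ν => ∫ y, F y ∂ν.toMeasure,
      (continuous_integral_of_continuous hF).continuousOn, fun ν hν => hεu ?_⟩
    rw [Real.dist_eq]
    linarith [hFψ ν hν]
  have haff : ∀ ν₁ ∈ invMeas SY, ∀ ν₂ ∈ invMeas SY, ∀ t : ℝ≥0, t ≤ 1 →
      ∀ ν : ProbabilityMeasure Y,
        ν.toMeasure = (t : ℝ≥0∞) • ν₁.toMeasure + (1 - (t : ℝ≥0∞)) • ν₂.toMeasure →
        psi2 TX SY f ν = (t : ℝ) * psi2 TX SY f ν₁ + (1 - (t : ℝ)) * psi2 TX SY f ν₂ := by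
    intro ν₁ h₁ ν₂ h₂ t ht ν h
    have hν : ν ∈ invMeas SY := convexCombination_mem_invMeas hS.measurable h₁ h₂ h
    refine eq_of_abs_sub_le_all fun ε hε => ?_
    obtain ⟨F, hF, hFψ⟩ := happrox (ε / 2) (half_pos hε)
    have ha := abs_le.1 (hFψ ν hν)
    have ha₁ := abs_le.1 (hFψ ν₁ h₁)
    have ha₂ := abs_le.1 (hFψ ν₂ h₂)
    rw [integral_convexCombination ht h hF] at ha
    have ht0 : (0 : ℝ) ≤ t := t.2
    have ht1 : (0 : ℝ) ≤ 1 - t := sub_nonneg.2 (by exact_mod_cast ht)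
    have hl₁ := mul_le_mul_of_nonneg_left ha₁.1 ht0
    have hu₁ := mul_le_mul_of_nonneg_left ha₁.2 ht0
    have hl₂ := mul_le_mul_of_nonneg_left ha₂.1 ht1
    have hu₂ := mul_le_mul_of_nonneg_left ha₂.2 ht1
    rw [abs_le]
    constructor <;> linarith
  refine ⟨hcont, haff, ?_⟩
  obtain ⟨ν₀, hν₀, herg, hmax⟩ := exists_ergodic_maximizer hS hcont haff
  refine ⟨ν₀, hν₀, herg, ?_⟩
  have hgreatest : IsGreatest {r | ∃ ν ∈ invMeas SY, r = psi2 TX SY f ν} (psi2 TX SY f ν₀) := by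
    refine ⟨⟨ν₀, hν₀, rfl⟩, ?_⟩
    rintro r ⟨ν, hν, rfl⟩
    exact hmax hν
  exact hgreatest.csSup_eq.symm
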